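/- arXiv:math/0508645 — 3 statements merged into one kernel-verified Lean document; each statement's English description precedes it below -/
import Mathlib

section
/- For every natural number n, the number of strictly monotone bijections from the poset Fin 2 × Fin n (with the componentwise/product order) to the linearly ordered set Fin (2*n) equals the n-th Catalan number. (Equivalently: the number of linear extensions of the Young-diagram poset of shape (n,n), i.e. the number of standard Young tableaux of shape (n,n), is the Catalan number C_n = (2n)!/(n!(n+1)!).) -/
/-!
A linear extension `f` of `Fin 2 × Fin n` is encoded by the word of length `2 * n` whose `k`-th
letter is `U` when `f⁻¹ k` lies in row `0` and `D` when it lies in row `1`. Since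
`f (0, j) < f (1, j)`, every prefix has at least as many `U`s as `D`s, so this is a Dyck word of
semilength `n` (`toDyck`).

The encoding is a bijection. The word determines the set of values of `f` on each row, and `f` is
increasing on rows, so it is determined by these sets (`toDyck_injective`). Conversely, enumerating
increasingly the positions of the `U`s and of the `D`s in a Dyck word gives the two rows of a
linear extension; the prefix condition says exactly that the `j`-th `U` precedes the `j`-th `D`
(`toDyck_surjective`). Mathlib counts Dyck words of given semilength by Catalan numbers.
-/

open Finset DyckStep

namespace CatalanLinearExtensions

/-- The linear extensions of `Fin 2 × Fin n`. -/
abbrev LinExt (n : ℕ) : Type := {f : Fin 2 × Fin n ≃ Fin (2 * n) // StrictMono ⇑f}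

lemma count_take_ofFn {N : ℕ} (w : Fin N → DyckStep) (s : DyckStep) (i : ℕ) :
    ((List.ofFn w).take i).count s = #{k : Fin N | (k : ℕ) < i ∧ w k = s} := by
  induction N generalizing i with
  | zero => simp
  | succ N ih =>
    cases i with
    | zero => simp
    | succ i =>
      rw [List.ofFn_succ, List.take_succ_cons, List.count_cons, ih, Fin.card_filter_univ_succ]
      by_cases h : w 0 = s <;> simp [h]

/-- The letter at position `k` of the word of `f`: `U` for row `0`, `D` for row `1`. -/
def letter {n : ℕ} (f : Fin 2 × Fin n ≃ Fin (2 * n)) (k : Fin (2 * n)) : DyckStep :=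
  if (f.symm k).1 = 0 then U else D

lemma letter_eq_U {n : ℕ} (f : Fin 2 × Fin n ≃ Fin (2 * n)) (k : Fin (2 * n)) :
    letter f k = U ↔ (f.symm k).1 = 0 := by
  unfold letter; split_ifs <;> simp_all

lemma letter_eq_D {n : ℕ} (f : Fin 2 × Fin n ≃ Fin (2 * n)) (k : Fin (2 * n)) :
    letter f k = D ↔ (f.symm k).1 = 1 := by
  unfold letter; split_ifs with h
  · simp [h]
  · simp only [true_iff]; omega

lemma card_row {n : ℕ} (f : Fin 2 × Fin n ≃ Fin (2 * n)) (a : Fin 2) (i : ℕ) :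
    #{k : Fin (2 * n) | (k : ℕ) < i ∧ (f.symm k).1 = a} = #{j : Fin n | (f (a, j) : ℕ) < i} := by
  symm
  refine Finset.card_bij (fun j _ => f (a, j)) ?_ ?_ ?_
  · intro j hj
    simpa using hj
  · intro j _ j' _ h
    simpa using h
  · intro k hk
    simp only [mem_filter, mem_univ, true_and] at hk
    have : f (a, (f.symm k).2) = k := by rw [← hk.2]; simp
    exact ⟨(f.symm k).2, by simpa [this] using hk.1, this⟩

lemma count_U {n : ℕ} (f : Fin 2 × Fin n ≃ Fin (2 * n)) (i : ℕ) :
    ((List.ofFn (letter f)).take i).count U = #{j : Fin n | (f (0, j) : ℕ) < i} := by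
  rw [count_take_ofFn, ← card_row]; simp only [letter_eq_U]

lemma count_D {n : ℕ} (f : Fin 2 × Fin n ≃ Fin (2 * n)) (i : ℕ) :
    ((List.ofFn (letter f)).take i).count D = #{j : Fin n | (f (1, j) : ℕ) < i} := by
  rw [count_take_ofFn, ← card_row]; simp only [letter_eq_D]

lemma count_U_full {n : ℕ} (f : Fin 2 × Fin n ≃ Fin (2 * n)) :
    (List.ofFn (letter f)).count U = n := by
  have := count_U f (2 * n)
  rwa [List.take_of_length_le (by simp), filter_true_of_mem (fun j _ => (f (0, j)).2),
    card_univ, Fintype.card_fin] at this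

lemma count_D_full {n : ℕ} (f : Fin 2 × Fin n ≃ Fin (2 * n)) :
    (List.ofFn (letter f)).count D = n := by
  have := count_D f (2 * n)
  rwa [List.take_of_length_le (by simp), filter_true_of_mem (fun j _ => (f (1, j)).2),
    card_univ, Fintype.card_fin] at this

/-- The Dyck word of a linear extension, recording the row of `f⁻¹ k` for each `k`. -/
def toDyck {n : ℕ} (f : LinExt n) : {p : DyckWord // p.semilength = n} :=
  ⟨{ toList := List.ofFn (letter f.1)
     count_U_eq_count_D := by rw [count_U_full, count_D_full]
     count_D_le_count_U := fun i => by
      rw [count_U, count_D]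
      refine card_le_card (monotone_filter_right _ fun j _ hj => ?_)
      have h : f.1 (0, j) < f.1 (1, j) := f.2 (by simp [Prod.lt_iff])
      exact lt_trans h hj },
    count_U_full f.1⟩

lemma strictMono_row {n : ℕ} (f : LinExt n) (a : Fin 2) : StrictMono fun j => f.1 (a, j) :=
  fun _ _ h => f.2 (by simpa [Prod.lt_iff] using h)

lemma toDyck_injective (n : ℕ) : Function.Injective (toDyck (n := n)) := by
  intro f g h
  have hw : letter f.1 = letter g.1 :=
    List.ofFn_injective (congrArg (fun p => p.1.toList) h)
  have hfst : ∀ k, (f.1.symm k).1 = (g.1.symm k).1 := by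
    intro k
    have hU := letter_eq_U f.1 k
    rw [hw, letter_eq_U] at hU
    omega
  have hrange : ∀ (e : LinExt n) (a : Fin 2),
      Set.range (fun j => e.1 (a, j)) = {k | (e.1.symm k).1 = a} := by
    intro e a
    ext k
    constructor
    · rintro ⟨j, rfl⟩; simp
    · rintro rfl; exact ⟨(e.1.symm k).2, by simp⟩
  apply Subtype.ext
  ext1 ⟨a, j⟩
  have := (strictMono_row f a).range_inj (strictMono_row g a) |>.1
    (by rw [hrange, hrange]; simp only [hfst])
  exact congrFun this j

lemma toDyck_surjective (n : ℕ) : Function.Surjective (toDyck (n := n)) := by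
  rintro ⟨p, hp⟩
  have hlen : p.toList.length = 2 * n := by rw [← p.two_mul_semilength_eq_length, hp]
  obtain ⟨w, hw⟩ : ∃ w : Fin (2 * n) → DyckStep, List.ofFn w = p.toList :=
    ⟨fun k => p.toList.get (k.cast hlen.symm), by
      apply List.ext_get <;> simp [hlen]⟩
  have hcard : ∀ s, #{k | w k = s} = p.toList.count s := by
    intro s
    have := count_take_ofFn w s (2 * n)
    rw [List.take_of_length_le (by simp), hw] at this
    simpa using this.symm
  have hU : #{k | w k = U} = n := (hcard U).trans hp
  have hD : #{k | w k = D} = n := (hcard D).trans (p.semilength_eq_count_D.symm.trans hp)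
  set u := Finset.orderEmbOfFin _ hU with hu
  set d := Finset.orderEmbOfFin _ hD with hd
  have wu : ∀ j, w (u j) = U := fun j => (Finset.mem_filter.1 (Finset.orderEmbOfFin_mem _ hU j)).2
  have wd : ∀ j, w (d j) = D := fun j => (Finset.mem_filter.1 (Finset.orderEmbOfFin_mem _ hD j)).2
  have hud : ∀ j, u j < d j := by
    intro j
    by_contra! hle
    -- In the prefix ending at the `j`-th `D` there are at least `j + 1` letters `D`, but every
    -- `U` there has index less than `j`.
    have hpre := p.count_D_le_count_U ((d j : ℕ) + 1)
    rw [← hw, count_take_ofFn, count_take_ofFn] at hpre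
    have h1 : #((Finset.Iic j).map d.toEmbedding) ≤
        #{k : Fin (2 * n) | (k : ℕ) < (d j : ℕ) + 1 ∧ w k = D} := by
      apply card_le_card
      intro k hk
      obtain ⟨i, hi, rfl⟩ := Finset.mem_map.1 hk
      have : d i ≤ d j := d.monotone (Finset.mem_Iic.1 hi)
      simpa [wd] using Nat.lt_succ_of_le this
    have h2 : #{k : Fin (2 * n) | (k : ℕ) < (d j : ℕ) + 1 ∧ w k = U} ≤
        #((Finset.Iio j).map u.toEmbedding) := by
      apply card_le_card
      intro k hk
      simp only [mem_filter, mem_univ, true_and] at hk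
      have hmem : k ∈ Set.range u := by
        rw [hu, Finset.range_orderEmbOfFin]; simpa using hk.2
      obtain ⟨i, rfl⟩ := hmem
      have hij : u i ≤ d j := Nat.le_of_lt_succ hk.1
      have hne : u j ≠ d j := fun h => by
        have := wu j
        rw [h, wd] at this
        cases this
      refine Finset.mem_map.2 ⟨i, Finset.mem_Iio.2 ?_, rfl⟩
      exact u.lt_iff_lt.1 (lt_of_le_of_lt hij (lt_of_le_of_ne hle hne.symm))
    simp only [Finset.card_map, Fin.card_Iic, Fin.card_Iio] at h1 h2
    omega
  let F : Fin 2 × Fin n → Fin (2 * n) := fun x => if x.1 = 0 then u x.2 else d x.2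
  have hF0 : ∀ j, F (0, j) = u j := fun j => rfl
  have hF1 : ∀ j, F (1, j) = d j := fun j => rfl
  have hmono : StrictMono F := by
    rintro ⟨a, i⟩ ⟨b, j⟩ hab
    have hab' := hab.le
    rw [Prod.mk_le_mk] at hab'
    fin_cases a <;> fin_cases b
    · exact u.strictMono (by simpa [Prod.lt_iff] using hab)
    · exact (hud i).trans_le (d.monotone hab'.2)
    · simp at hab'
    · exact d.strictMono (by simpa [Prod.lt_iff] using hab)
  have hinj : Function.Injective F := by
    have hne : ∀ i j, u i ≠ d j := fun i j h => by
      have := wu i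
      rw [h, wd] at this
      cases this
    rintro ⟨a, i⟩ ⟨b, j⟩ h
    fin_cases a <;> fin_cases b
    · simpa using u.injective h
    · exact (hne _ _ h).elim
    · exact (hne _ _ h.symm).elim
    · simpa using d.injective h
  have hbij : Function.Bijective F :=
    (Fintype.bijective_iff_injective_and_card F).2 ⟨hinj, by simp⟩
  refine ⟨⟨Equiv.ofBijective F hbij, hmono⟩, Subtype.ext (DyckWord.ext ?_)⟩
  change List.ofFn (letter (Equiv.ofBijective F hbij)) = p.toList
  rw [← hw]
  congr 1
  funext k
  obtain ⟨⟨a, j⟩, rfl⟩ := hbij.2 k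
  have hs : (Equiv.ofBijective F hbij).symm (F (a, j)) = (a, j) :=
    Equiv.ofBijective_symm_apply_apply F hbij (a, j)
  unfold letter
  rw [hs]
  fin_cases a
  · exact (wu j).symm
  · exact (wd j).symm

end CatalanLinearExtensions

/-- The number of linear extensions of the Young-diagram poset of shape `(n,n)`,
i.e. of strictly monotone bijections from `Fin 2 × Fin n` (product order)
to `Fin (2*n)`, is the `n`-th Catalan number. -/
theorem catalan_linear_extensions (n : ℕ) :
    Nat.card {f : Fin 2 × Fin n ≃ Fin (2 * n) // StrictMono ⇑f} = catalan n := by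
  rw [Nat.card_congr (Equiv.ofBijective CatalanLinearExtensions.toDyck
    ⟨CatalanLinearExtensions.toDyck_injective n, CatalanLinearExtensions.toDyck_surjective n⟩),
    Nat.card_eq_fintype_card, DyckWord.card_dyckWord_semilength_eq_catalan]
end

section
/- For every natural number m, the number of walks of length m in the path graph on 4 vertices {0,1,2,3} (with edges exactly between i and i+1) that start at the end vertex 0 equals the Fibonacci number F_{m+1} (with F_1 = F_2 = 1). (This enumerates the mates in n of Diagram 4: there are F_n mates in exactly n moves.) -/
/-!
Splitting off the first step of a walk shows that the number of walks of length `m + 1` from `u`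
is the sum, over the neighbours `w` of `u`, of the number of walks of length `m` from `w`
(`walksFromSuccEquiv`). On the path `0 - 1 - 2 - 3`, this recursion is solved by `F_{m+1}` at the
end vertices `0, 3` and `F_{m+2}` at the inner vertices `1, 2`: an end vertex has one inner
neighbour, and an inner vertex has one neighbour of each kind, so the inner count obeys the
Fibonacci recursion (`card_walksFrom_pathGraph_four`).
-/

/-- The walks of length `m` in `G` that start at `u`, with arbitrary end vertex. -/
abbrev WalksFrom {V : Type*} (G : SimpleGraph V) (m : ℕ) (u : V) :=
  {p : (v : V) × G.Walk u v // p.2.length = m}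

/-- A walk of length `m + 1` from `u` is a first step to a neighbour `w` of `u`, followed by a walk
of length `m` from `w`. -/
def walksFromSuccEquiv {V : Type*} (G : SimpleGraph V) (m : ℕ) (u : V) :
    WalksFrom G (m + 1) u ≃ (w : {w : V // G.Adj u w}) × WalksFrom G m w.1 where
  toFun
    | ⟨⟨_, .nil⟩, h⟩ => absurd h (Nat.succ_ne_zero m).symm
    | ⟨⟨v, .cons (v := w) e p⟩, h⟩ => ⟨⟨w, e⟩, ⟨⟨v, p⟩, Nat.succ.inj h⟩⟩
  invFun
    | ⟨⟨_, e⟩, ⟨⟨v, p⟩, h⟩⟩ => ⟨⟨v, .cons e p⟩, congrArg Nat.succ h⟩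
  left_inv
    | ⟨⟨_, .nil⟩, h⟩ => absurd h (Nat.succ_ne_zero m).symm
    | ⟨⟨_, .cons _ _⟩, _⟩ => rfl
  right_inv
    | ⟨⟨_, _⟩, ⟨⟨_, _⟩, _⟩⟩ => rfl

/-- The only walk of length `0` from `u` is the trivial one. -/
theorem card_walksFrom_zero {V : Type*} (G : SimpleGraph V) (u : V) :
    Nat.card (WalksFrom G 0 u) = 1 := by
  rw [Nat.card_eq_one_iff_unique]
  refine ⟨⟨?_⟩, ⟨⟨⟨u, .nil⟩, rfl⟩⟩⟩
  rintro ⟨⟨_, _ | _⟩, h⟩ ⟨⟨_, _ | _⟩, h'⟩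
  · rfl
  · exact absurd h' (Nat.succ_ne_zero _)
  · exact absurd h (Nat.succ_ne_zero _)
  · exact absurd h (Nat.succ_ne_zero _)

theorem finite_walksFrom {V : Type*} [Finite V] (G : SimpleGraph V) (m : ℕ) (u : V) :
    Finite (WalksFrom G m u) := by
  induction m generalizing u with
  | zero => exact Nat.finite_of_card_ne_zero (by simp [card_walksFrom_zero])
  | succ m ih => exact Finite.of_equiv _ (walksFromSuccEquiv G m u).symm

theorem card_walksFrom_succ {V : Type*} [Fintype V] (G : SimpleGraph V) [DecidableRel G.Adj]
    (m : ℕ) (u : V) :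
    Nat.card (WalksFrom G (m + 1) u) =
      ∑ w : V, if G.Adj u w then Nat.card (WalksFrom G m w) else 0 := by
  have := finite_walksFrom G m
  rw [Nat.card_congr (walksFromSuccEquiv G m u), Nat.card_sigma, ← Finset.sum_filter]
  exact (Finset.sum_subtype _ (by simp) fun w => Nat.card (WalksFrom G m w)).symm

/-- The walk counts from all four vertices, which are needed together for the induction. -/
theorem card_walksFrom_pathGraph_four (m : ℕ) (u : Fin 4) :
    Nat.card (WalksFrom (SimpleGraph.pathGraph 4) m u) =
      if u = 0 ∨ u = 3 then Nat.fib (m + 1) else Nat.fib (m + 2) := by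
  classical
  induction m generalizing u with
  | zero => rw [card_walksFrom_zero]; simp
  | succ m ih =>
    have hf : Nat.fib (m + 3) = Nat.fib (m + 1) + Nat.fib (m + 2) := Nat.fib_add_two
    simp only [card_walksFrom_succ, ih, Fin.sum_univ_four, SimpleGraph.pathGraph_adj]
    fin_cases u <;> simp [hf, add_assoc, Nat.add_comm (Nat.fib (m + 2))]

/-- Diagram 4: for every `m`, the number of walks of length `m` in the path graph
on `4` vertices that start at the end vertex `0` equals the Fibonacci number
`F_{m+1}` (with `F_1 = F_2 = 1`); hence Diagram 4 has `F_n` mates in exactly `n`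
moves. -/
theorem path_walk_count_fib (m : ℕ) :
    Nat.card {p : (v : Fin 4) × (SimpleGraph.pathGraph 4).Walk 0 v //
      p.2.length = m} = Nat.fib (m + 1) := by
  simpa using card_walksFrom_pathGraph_four m 0
end

section
/- The number of permutations σ of Fin 9 satisfying σ 0 < σ 1, σ 1 < σ 2, σ 2 < σ 3 (a 4-element chain), σ 4 < σ 5, σ 5 < σ 6, σ 5 < σ 7, σ 4 < σ 8, and σ 4 < σ 3, equals 2·4·(C(9,4) − 1) = 1000. (This is Black's enumeration in the proof-game problem Diagram 8: the chain is b5,Bb7,Bd5,Be6; the remaining five moves are e5 (index 4), Qg5 (index 5), Nf6 (index 6), Kd8 (index 7), Bd6 (index 8), with e5 first among them, Nf6 and Kd8 after Qg5, Bd6 after e5, and e5 before Be6.) -/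
/-!
Reading the time slots in order, a linear extension `σ` of a finite poset is the same as the list
`[σ⁻¹ 0, σ⁻¹ 1, …]` of all its elements in which no element precedes one of its predecessors.
Such a list starts with a minimal element `x`, and its tail is an arbitrary list of the same kind
for the poset with `x` removed. This recursion (`linExts`) produces every linear extension
exactly once (`mem_linExts`, `nodup_linExts`). For the nine-element poset at hand it runs through
few enough partial lists that the kernel can evaluate the number of results to `1000`;
`card_perm_eq_length_linExts` carries the count back to permutations.
-/

/-- All orderings of the elements of `S` (of which there should be `n`) in which no `b` comes
before an `a` with `r a b`: choose a minimal element of `S` as the head, then order the rest.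
The number `n` only serves to make the recursion structural. -/
def linExts {α : Type*} [DecidableEq α] (r : α → α → Bool) : ℕ → List α → List (List α)
  | 0, _ => [[]]
  | n + 1, S => (S.filter fun x => S.all fun y => !r y x).flatMap fun x =>
      (linExts r n (S.erase x)).map (x :: ·)

/-- Irreflexivity is needed because `linExts` compares a candidate head with itself too. -/
theorem mem_linExts {α : Type*} [DecidableEq α] {r : α → α → Bool} (hr : ∀ a, r a a = false)
    (n : ℕ) (S : List α) (hS : S.length = n) (l : List α) :
    l ∈ linExts r n S ↔ l.Perm S ∧ l.Pairwise fun a b => r b a = false := by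
  induction n generalizing S l with
  | zero =>
    obtain rfl := List.length_eq_zero_iff.mp hS
    simp only [linExts, List.mem_singleton, List.perm_nil]
    constructor
    · rintro rfl
      simp
    · exact And.left
  | succ n ih =>
    simp only [linExts, List.mem_flatMap, List.mem_filter, List.mem_map, List.all_eq_true,
      Bool.not_eq_true']
    constructor
    · rintro ⟨x, ⟨hx, hmin⟩, t, ht, rfl⟩
      rw [ih _ (by rw [List.length_erase_of_mem hx, hS]; rfl)] at ht
      refine ⟨(ht.1.cons x).trans (List.perm_cons_erase hx).symm, ?_⟩
      exact List.pairwise_cons.mpr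
        ⟨fun y hy => hmin y (List.mem_of_mem_erase (ht.1.subset hy)), ht.2⟩
    · rintro ⟨hp, hl⟩
      cases l with
      | nil => simp [← hp.length_eq] at hS
      | cons x t =>
        have hx : x ∈ S := hp.subset (by simp)
        rw [List.pairwise_cons] at hl
        refine ⟨x, ⟨hx, fun y hy => ?_⟩, t, ?_, rfl⟩
        · rcases List.mem_cons.mp (hp.symm.subset hy) with rfl | hy'
          · exact hr y
          · exact hl.1 y hy'
        · rw [ih _ (by rw [List.length_erase_of_mem hx, hS]; rfl)]
          exact ⟨List.cons_perm_iff_perm_erase.mp hp |>.2, hl.2⟩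

theorem nodup_linExts {α : Type*} [DecidableEq α] (r : α → α → Bool) (n : ℕ) (S : List α)
    (hS : S.Nodup) : (linExts r n S).Nodup := by
  induction n generalizing S with
  | zero => simp [linExts]
  | succ n ih =>
    rw [linExts, List.nodup_flatMap]
    refine ⟨fun x _ => (ih _ (hS.erase x)).map (List.cons_injective), ?_⟩
    -- lists coming from different heads are different
    refine (hS.filter _).imp fun {x y} hxy => ?_
    intro l hx hy
    simp only [List.mem_map] at hx hy
    obtain ⟨s, -, rfl⟩ := hx
    obtain ⟨t, -, h⟩ := hy
    exact hxy (List.cons.inj h).1.symm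

/-- The `r`-monotone permutations of `Fin n` correspond to the lists in `linExts`, a permutation
`σ` being sent to the list of its preimages `[σ⁻¹ 0, …, σ⁻¹ (n - 1)]`. -/
theorem card_perm_eq_length_linExts {n : ℕ} {r : Fin n → Fin n → Bool}
    (hr : ∀ a, r a a = false) :
    Nat.card {σ : Equiv.Perm (Fin n) // ∀ a b, r a b = true → σ a < σ b} =
      (linExts r n (List.finRange n)).length := by
  have hmem := mem_linExts hr n (List.finRange n) (by simp)
  rw [← List.toFinset_card_of_nodup (nodup_linExts r n _ (List.nodup_finRange n)),
    ← Nat.card_eq_finsetCard]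
  refine Nat.card_eq_of_bijective
    (fun σ => ⟨List.ofFn σ.1.symm, List.mem_toFinset.mpr ((hmem _).mpr ⟨?_, ?_⟩)⟩) ⟨?_, ?_⟩
  · rw [List.perm_ext_iff_of_nodup (List.nodup_ofFn.mpr σ.1.symm.injective)
      (List.nodup_finRange n)]
    exact fun a => by simpa [List.mem_ofFn] using σ.1.symm.surjective a
  · rw [List.pairwise_ofFn]
    intro i j hij
    by_contra h
    have := σ.2 _ _ (Bool.not_eq_false _ ▸ h)
    simp only [Equiv.apply_symm_apply] at this
    exact lt_asymm hij this
  · intro σ τ h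
    have h' := List.ofFn_injective (Subtype.ext_iff.mp h)
    exact Subtype.ext (Equiv.symm_bijective.injective (DFunLike.coe_injective h'))
  · rintro ⟨l, hl⟩
    obtain ⟨hp, hl⟩ := (hmem l).mp (List.mem_toFinset.mp hl)
    have hlen : l.length = n := by simpa using hp.length_eq
    obtain ⟨f, rfl⟩ : ∃ f : Fin n → Fin n, l = List.ofFn f :=
      ⟨fun i => l.get (i.cast hlen.symm), List.ext_get (by simp [hlen]) (by simp)⟩
    have hf : Function.Injective f :=
      List.nodup_ofFn.mp (hp.nodup_iff.mpr (List.nodup_finRange n))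
    let σ : Equiv.Perm (Fin n) := (Equiv.ofBijective f (Finite.injective_iff_bijective.mp hf)).symm
    have hσ : ∀ a, f (σ a) = a := (Equiv.ofBijective f _).apply_symm_apply
    refine ⟨⟨σ, fun a b hab => ?_⟩, rfl⟩
    by_contra hlt
    rcases (not_lt.mp hlt).lt_or_eq with h | h
    · have := List.pairwise_ofFn.mp hl h
      rw [hσ, hσ, hab] at this
      exact Bool.noConfusion this
    · rw [σ.injective h, hr] at hab
      exact Bool.noConfusion hab

/-- The generating relations of the poset. -/
def blackRel (a b : Fin 9) : Bool :=
  [(0, 1), (1, 2), (2, 3), (4, 5), (5, 6), (5, 7), (4, 8), (4, 3)].contains (a.val, b.val)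

theorem length_linExts_blackRel : (linExts blackRel 9 (List.finRange 9)).length = 1000 := by
  decide +kernel

/-- Black's enumeration in the proof-game problem Diagram 8: the number of
permutations `σ` of `Fin 9` satisfying `σ 0 < σ 1 < σ 2 < σ 3` (the 4-chain
b5, Bb7, Bd5, Be6), `σ 4 < σ 5`, `σ 5 < σ 6`, `σ 5 < σ 7`, `σ 4 < σ 8`, and
`σ 4 < σ 3` equals `2·4·(C(9,4) − 1) = 1000`. -/
theorem diagram8_black_count :
    Nat.card {σ : Equiv.Perm (Fin 9) //
      σ 0 < σ 1 ∧ σ 1 < σ 2 ∧ σ 2 < σ 3 ∧ σ 4 < σ 5 ∧ σ 5 < σ 6 ∧ σ 5 < σ 7 ∧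
        σ 4 < σ 8 ∧ σ 4 < σ 3} = 1000 := by
  rw [← length_linExts_blackRel, ← card_perm_eq_length_linExts (by decide)]
  refine Nat.card_congr (Equiv.subtypeEquivRight fun σ => ⟨?_, fun h => ?_⟩)
  · rintro ⟨h1, h2, h3, h4, h5, h6, h7, h8⟩ a b hab
    simp only [blackRel, List.contains_eq_mem, List.mem_cons, List.not_mem_nil, Prod.mk.injEq,
      or_false, decide_eq_true_eq] at hab
    obtain ⟨a, ha⟩ := a
    obtain ⟨b, hb⟩ := b
    rcases hab with ⟨rfl, rfl⟩ | ⟨rfl, rfl⟩ | ⟨rfl, rfl⟩ | ⟨rfl, rfl⟩ | ⟨rfl, rfl⟩ |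
      ⟨rfl, rfl⟩ | ⟨rfl, rfl⟩ | ⟨rfl, rfl⟩ <;> assumption
  · exact ⟨h _ _ rfl, h _ _ rfl, h _ _ rfl, h _ _ rfl, h _ _ rfl, h _ _ rfl, h _ _ rfl,
      h _ _ rfl⟩
end
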